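/- Let M be a modular lattice and let a ≤ b be elements of M. Then any two finite maximal chains from a to b have equal length; precisely, if a = x₀ ⋖ x₁ ⋖ … ⋖ x_k = b and a = y₀ ⋖ y₁ ⋖ … ⋖ y_m = b are two chains in M in which every step is a covering relation, then k = m (the Jordan–Hölder–Dedekind chain condition holds in every modular lattice). -/

import Mathlib

/-- Jordan–Hölder–Dedekind chain condition in a modular lattice: any two finite
maximal chains (chains in which every step is a covering relation) from `a` to `b`
have equal length. -/
theorem jordan_holder_dedekind_modular_lattice {M : Type*} [Lattice M]
    [IsModularLattice M] (a b : M) (hab : a ≤ b) (k m : ℕ)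
    (x : Fin (k + 1) → M) (y : Fin (m + 1) → M)
    (hx0 : x 0 = a) (hxl : x (Fin.last k) = b)
    (hy0 : y 0 = a) (hyl : y (Fin.last m) = b)
    (hx : ∀ i : Fin k, x i.castSucc ⋖ x i.succ)
    (hy : ∀ i : Fin m, y i.castSucc ⋖ y i.succ) :
    k = m := by
  let s₁ : CompositionSeries M := { length := k, toFun := x, step := hx }
  let s₂ : CompositionSeries M := { length := m, toFun := y, step := hy }
  exact (CompositionSeries.jordan_holder s₁ s₂ (hx0.trans hy0.symm)
    (hxl.trans hyl.symm)).length_eq
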